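/- The 2-sum M of the matrices B1 and B2 (the two special 5×5 totally unimodular building blocks from Seymour's decomposition theorem, 2-summed along the last column of B1 and the first row of B2) is totally unimodular but is not a network matrix. -/

import Mathlib

/-- A real matrix is totally unimodular if every square submatrix has determinant 0, +1 or -1. -/
def IsTU {m n : Type*} (A : Matrix m n ℝ) : Prop :=
  ∀ (k : ℕ) (f : Fin k → m) (g : Fin k → n), Function.Injective f → Function.Injective g →
    (A.submatrix f g).det ∈ ({0, 1, -1} : Set ℝ)

/-- The node-edge incidence matrix of a directed graph, given by its tail and head maps. -/
def digraphIncid {V E : Type*} [DecidableEq V] (tail head : E → V) : Matrix V E ℝ :=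
  Matrix.of fun v e =>
    if head e = tail e then 0
    else (if v = head e then 1 else 0) - (if v = tail e then 1 else 0)

/-- `N` is a network matrix: `[R | S]` is the incidence matrix of a directed graph (on node
set `Option m`) minus the row of the node `none`, `R` is an invertible basis part, and
`N = R⁻¹ * S`. -/
def IsNetworkMatrix {m n : Type*} [Fintype m] [DecidableEq m] [Fintype n]
    (N : Matrix m n ℝ) : Prop :=
  ∃ tail head : m ⊕ n → Option m,
    IsUnit ((digraphIncid tail head).submatrix some Sum.inl : Matrix m m ℝ).det ∧
    N = ((digraphIncid tail head).submatrix some Sum.inl : Matrix m m ℝ)⁻¹ *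
        (digraphIncid tail head).submatrix some Sum.inr

/-!
A square submatrix of a 2-sum is again a 2-sum, so total unimodularity of the 2-sum only needs its
determinant. The 2-sum is a product of totally unimodular matrices in two ways, one through the rows
of `B₁` and the columns of `B₂`, the other through the columns of `B₁` and the rows of `B₂`. If the
2-sum is square, the inner dimension of one of these products is at most its size, and then the
determinant is a product of two minors.

If `M` is a network matrix, each node of its digraph gives a nonzero element of the row space of
`[I | M]` whose support is the set of edges at that node. Modulo 2 such an element has at least four
nonzero entries: this can be checked for `B₁` and `B₂`, and it is inherited by their 2-sum. The ten
nodes would then require 40 edge ends, while 18 edges have only 36.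
-/

open Matrix

section TotallyUnimodular

variable {m n l R : Type*} [CommRing R]

lemma isTU_iff_isTotallyUnimodular {A : Matrix m n ℝ} : IsTU A ↔ A.IsTotallyUnimodular := by
  have range_eq : Set.range (SignType.cast : SignType → ℝ) = {0, 1, -1} := by
    rw [SignType.range_eq]
    ext x
    simp [or_comm (a := x = -1)]
  simp only [IsTU, IsTotallyUnimodular, range_eq]

lemma mul_mem_range_signTypeCast {x y : R} (hx : x ∈ Set.range SignType.cast)
    (hy : y ∈ Set.range SignType.cast) : x * y ∈ Set.range SignType.cast := by
  obtain ⟨s, rfl⟩ := hx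
  obtain ⟨t, rfl⟩ := hy
  exact ⟨s * t, SignType.coe_mul s t⟩

lemma intUnits_cast_mem_range_signTypeCast (u : ℤˣ) :
    ((u : ℤ) : R) ∈ Set.range SignType.cast := by
  rcases Int.units_eq_one_or u with rfl | rfl
  · exact ⟨1, by simp⟩
  · exact ⟨-1, by simp⟩

lemma isTotallyUnimodular_map {S : Type*} [CommRing S] (φ : R →+* S) {A : Matrix m n R}
    (hA : A.IsTotallyUnimodular) : (A.map φ).IsTotallyUnimodular := by
  intro k f g hf hg
  obtain ⟨s, hs⟩ := hA k f g hf hg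
  have hdet : ((A.map φ).submatrix f g).det = φ (A.submatrix f g).det :=
    (φ.map_det (A.submatrix f g)).symm
  exact ⟨s, by rw [hdet, ← hs, SignType.map_cast]⟩

lemma det_submatrix_equiv_mem_range_signTypeCast [Fintype l] [DecidableEq l] {A : Matrix l l R}
    (hA : A.det ∈ Set.range SignType.cast) (σ τ : Equiv.Perm l) :
    (A.submatrix σ τ).det ∈ Set.range SignType.cast := by
  have hdet : (A.submatrix σ τ).det = (σ.sign : ℤ) * ((τ.sign : ℤ) * A.det) := by
    rw [← det_permute', ← det_permute]
    rfl
  rw [hdet]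
  exact mul_mem_range_signTypeCast (intUnits_cast_mem_range_signTypeCast _)
    (mul_mem_range_signTypeCast (intUnits_cast_mem_range_signTypeCast _) hA)

lemma isTotallyUnimodular_of_det_of_strictMono {p : ℕ} {A : Matrix (Fin p) (Fin p) R}
    (hdet : A.det ∈ Set.range SignType.cast)
    (hA : ∀ k < p, ∀ f : Fin k → Fin p, StrictMono f → ∀ g : Fin k → Fin p, StrictMono g →
      (A.submatrix f g).det ∈ Set.range SignType.cast) :
    A.IsTotallyUnimodular := by
  intro k f g hf hg
  rcases (Fin.le_of_injective f hf).eq_or_lt with rfl | hk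
  · exact det_submatrix_equiv_mem_range_signTypeCast hdet
      (Equiv.ofBijective f hf.bijective_of_finite) (Equiv.ofBijective g hg.bijective_of_finite)
  · have hf' := (Tuple.monotone_sort f).strictMono_of_injective (hf.comp (Tuple.sort f).injective)
    have hg' := (Tuple.monotone_sort g).strictMono_of_injective (hg.comp (Tuple.sort g).injective)
    simpa [Function.comp_assoc] using det_submatrix_equiv_mem_range_signTypeCast
      (hA k hk _ hf' _ hg') (Tuple.sort f).symm (Tuple.sort g).symm

lemma isTotallyUnimodular_mul_rows {A : Matrix m n R} (hA : A.IsTotallyUnimodular)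
    (s : m → SignType) : (of fun i j => (s i : R) * A i j).IsTotallyUnimodular := by
  intro k f g hf hg
  have hdet : ((of fun i j => (s i : R) * A i j).submatrix f g).det =
      (∏ i, (s (f i) : R)) * (A.submatrix f g).det :=
    det_mul_column (fun i => (s (f i) : R)) (A.submatrix f g)
  rw [hdet]
  exact mul_mem_range_signTypeCast
    ⟨∏ i, s (f i), map_prod SignType.castHom (fun i => s (f i)) Finset.univ⟩ (hA k f g hf hg)

lemma isTotallyUnimodular_fromBlocks_one_zero {m₁ m₂ n₂ : Type*} [DecidableEq m₁]
    {X : Matrix m₁ n₂ R} {B : Matrix m₂ n₂ R} (h : (fromRows X B).IsTotallyUnimodular) :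
    (fromBlocks (1 : Matrix m₁ m₁ R) X 0 B).IsTotallyUnimodular := by
  classical
  convert h.one_fromCols.submatrix id (Sum.map Sum.inl id) using 1
  ext (i | i) (j | j) <;> simp [one_apply]

lemma isTotallyUnimodular_fromBlocks_diagonal_one [DecidableEq l] {A : Matrix m n R}
    (hA : A.IsTotallyUnimodular) :
    (fromBlocks A 0 0 (1 : Matrix l l R)).IsTotallyUnimodular := by
  classical
  have h : (fromRows A (0 : Matrix l n R)).IsTotallyUnimodular :=
    (fromRows_replicateRow0_isTotallyUnimodular_iff A).2 hA
  convert h.fromCols_one.submatrix id (Sum.map id Sum.inr) using 1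
  ext (i | i) (j | j) <;> simp [one_apply]

lemma isTotallyUnimodular_fromBlocks_one_diagonal [DecidableEq l] {A : Matrix m n R}
    (hA : A.IsTotallyUnimodular) :
    (fromBlocks (1 : Matrix l l R) 0 0 A).IsTotallyUnimodular := by
  simpa using (isTotallyUnimodular_fromBlocks_diagonal_one hA).submatrix Sum.swap Sum.swap

-- Padding `P` with zero columns and `Q` with zero rows makes both factors square.
lemma det_mul_mem_range_signTypeCast [Fintype m] [DecidableEq m] [Fintype l]
    {P : Matrix m l R} {Q : Matrix l m R} (hP : P.IsTotallyUnimodular)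
    (hQ : Q.IsTotallyUnimodular) (hcard : Fintype.card l ≤ Fintype.card m) :
    (P * Q).det ∈ Set.range SignType.cast := by
  obtain ⟨d, hd⟩ := Nat.exists_eq_add_of_le hcard
  let e : m ≃ l ⊕ Fin d := Fintype.equivOfCardEq (by simpa using hd)
  let P' := (fromCols P (replicateCol (Fin d) 0)).submatrix id e
  let Q' := (fromRows Q (replicateRow (Fin d) 0)).submatrix e id
  have hP' : P'.IsTotallyUnimodular :=
    ((fromCols_replicateCol0_isTotallyUnimodular_iff P).2 hP).submatrix _ _
  have hQ' : Q'.IsTotallyUnimodular :=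
    ((fromRows_replicateRow0_isTotallyUnimodular_iff Q).2 hQ).submatrix _ _
  have hPQ : P * Q = P' * Q' := by
    rw [submatrix_mul_equiv, fromCols_mul_fromRows]
    ext i j
    simp [Matrix.mul_apply]
  rw [hPQ, det_mul]
  exact mul_mem_range_signTypeCast
    (by simpa using (isTotallyUnimodular_iff_fintype P').1 hP' m id id)
    (by simpa using (isTotallyUnimodular_iff_fintype Q').1 hQ' m id id)

end TotallyUnimodular

section TwoSum

variable {m₁ m₂ n₁ n₂ R : Type*}

/-- The 2-sum `[[A, a * b], [0, B]]` of `B₁ = [A | a]` and `B₂ = [b ; B]`; the index type `Fin 1`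
marks the last column of `B₁` and the first row of `B₂`. -/
def twoSum [NonUnitalNonAssocSemiring R] (B₁ : Matrix m₁ (n₁ ⊕ Fin 1) R)
    (B₂ : Matrix (Fin 1 ⊕ m₂) n₂ R) : Matrix (m₁ ⊕ m₂) (n₁ ⊕ n₂) R :=
  fromBlocks B₁.toCols₁ (B₁.toCols₂ * B₂.toRows₁) 0 B₂.toRows₂

lemma twoSum_submatrix [NonUnitalNonAssocSemiring R] {m₁' m₂' n₁' n₂' : Type*}
    (B₁ : Matrix m₁ (n₁ ⊕ Fin 1) R) (B₂ : Matrix (Fin 1 ⊕ m₂) n₂ R)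
    (f₁ : m₁' → m₁) (f₂ : m₂' → m₂) (g₁ : n₁' → n₁) (g₂ : n₂' → n₂) :
    (twoSum B₁ B₂).submatrix (Sum.map f₁ f₂) (Sum.map g₁ g₂) =
      twoSum (B₁.submatrix f₁ (Sum.map g₁ id)) (B₂.submatrix (Sum.map id f₂) g₂) := by
  ext (i | i) (j | j) <;> simp [twoSum, Matrix.mul_apply]

lemma twoSum_map {S : Type*} [NonAssocSemiring R] [NonAssocSemiring S] (φ : R →+* S)
    (B₁ : Matrix m₁ (n₁ ⊕ Fin 1) R) (B₂ : Matrix (Fin 1 ⊕ m₂) n₂ R) :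
    (twoSum B₁ B₂).map φ = twoSum (B₁.map φ) (B₂.map φ) := by
  ext (i | i) (j | j) <;> simp [twoSum, Matrix.mul_apply]

section Semiring

variable [Semiring R] {B₁ : Matrix m₁ (n₁ ⊕ Fin 1) R} {B₂ : Matrix (Fin 1 ⊕ m₂) n₂ R}

lemma twoSum_eq_mul_over_rows₁_cols₂ [Fintype m₁] [Fintype n₂] [DecidableEq m₁] [DecidableEq n₂] :
    twoSum B₁ B₂ =
      (fromBlocks 1 (B₁.toCols₂ * B₂.toRows₁) 0 B₂.toRows₂ : Matrix (m₁ ⊕ m₂) (m₁ ⊕ n₂) R) *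
        (fromBlocks B₁.toCols₁ 0 0 1 : Matrix (m₁ ⊕ n₂) (n₁ ⊕ n₂) R) := by
  simp [twoSum, fromBlocks_multiply]

lemma twoSum_eq_mul_over_cols₁_rows₂ [Fintype n₁] [Fintype m₂] [DecidableEq n₁] [DecidableEq m₂] :
    twoSum B₁ B₂ =
      (fromBlocks B₁ 0 0 1 : Matrix (m₁ ⊕ m₂) ((n₁ ⊕ Fin 1) ⊕ m₂) R) *
        (fromBlocks 1 0 0 B₂).submatrix (Equiv.sumAssoc n₁ (Fin 1) m₂) id := by
  ext (i | i) (j | j) <;> simp [twoSum, Matrix.mul_apply, one_apply]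

end Semiring

variable [CommRing R] {B₁ : Matrix m₁ (n₁ ⊕ Fin 1) R} {B₂ : Matrix (Fin 1 ⊕ m₂) n₂ R}

lemma isTotallyUnimodular_fromRows_toCols₂_mul_toRows₁ (h₁ : B₁.IsTotallyUnimodular)
    (h₂ : B₂.IsTotallyUnimodular) :
    (fromRows (B₁.toCols₂ * B₂.toRows₁) B₂.toRows₂).IsTotallyUnimodular := by
  choose s hs using fun i => h₁.apply i (Sum.inr 0)
  convert isTotallyUnimodular_mul_rows
    (h₂.submatrix (Sum.map (fun _ : m₁ => (0 : Fin 1)) id) id) (Sum.elim s 1) using 1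
  ext (i | i) j <;> simp [Matrix.mul_apply, hs]

/- The two factorizations of the 2-sum have inner dimensions `|m₁| + |n₂|` and `|n₁| + 1 + |m₂|`,
one of which is at most the size of the determinant. -/
lemma det_twoSum_submatrix_mem_range_signTypeCast {l : Type*} [Fintype l] [DecidableEq l]
    (h₁ : B₁.IsTotallyUnimodular) (h₂ : B₂.IsTotallyUnimodular) (e : l ≃ m₁ ⊕ m₂)
    (e' : l ≃ n₁ ⊕ n₂) :
    ((twoSum B₁ B₂).submatrix e e').det ∈ Set.range SignType.cast := by
  classical
  have : Fintype m₁ := .ofInjective _ (e.symm.injective.comp Sum.inl_injective)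
  have : Fintype m₂ := .ofInjective _ (e.symm.injective.comp Sum.inr_injective)
  have : Fintype n₁ := .ofInjective _ (e'.symm.injective.comp Sum.inl_injective)
  have : Fintype n₂ := .ofInjective _ (e'.symm.injective.comp Sum.inr_injective)
  have hrows := Fintype.card_congr e
  have hcols := Fintype.card_congr e'
  rw [Fintype.card_sum] at hrows hcols
  rcases le_or_gt (Fintype.card m₁) (Fintype.card n₁) with h | h
  · rw [twoSum_eq_mul_over_rows₁_cols₂, submatrix_mul _ _ e id e' Function.bijective_id]
    refine det_mul_mem_range_signTypeCast ?_ ?_ ?_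
    · exact (isTotallyUnimodular_fromBlocks_one_zero
        (isTotallyUnimodular_fromRows_toCols₂_mul_toRows₁ h₁ h₂)).submatrix _ _
    · exact (isTotallyUnimodular_fromBlocks_diagonal_one (h₁.submatrix id Sum.inl)).submatrix _ _
    · rw [Fintype.card_sum]
      lia
  · rw [twoSum_eq_mul_over_cols₁_rows₂, submatrix_mul _ _ e id e' Function.bijective_id]
    refine det_mul_mem_range_signTypeCast ?_ ?_ ?_
    · exact (isTotallyUnimodular_fromBlocks_diagonal_one h₁).submatrix _ _
    · exact ((isTotallyUnimodular_fromBlocks_one_diagonal h₂).submatrix _ _).submatrix _ _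
    · rw [Fintype.card_sum, Fintype.card_sum, Fintype.card_fin]
      lia

lemma exists_equiv_sumMap_comp_eq {k α β : Type*} (f : k → α ⊕ β) :
    ∃ (p : k → Prop) (e : k ≃ {i // p i} ⊕ {i // ¬ p i}) (f₁ : {i // p i} → α)
      (f₂ : {i // ¬ p i} → β), Sum.map f₁ f₂ ∘ e = f := by
  classical
  let e := Equiv.sumCompl fun i => (f i).isLeft = true
  refine ⟨_, e.symm, fun i => (f i).getLeft i.2, fun i => (f i).getRight (by simpa using i.2), ?_⟩
  rw [e.comp_symm_eq]
  ext (i | i) <;> simp [e]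

theorem isTotallyUnimodular_twoSum (h₁ : B₁.IsTotallyUnimodular) (h₂ : B₂.IsTotallyUnimodular) :
    (twoSum B₁ B₂).IsTotallyUnimodular := by
  classical
  intro k f g _ _
  obtain ⟨_, e, f₁, f₂, rfl⟩ := exists_equiv_sumMap_comp_eq f
  obtain ⟨_, e', g₁, g₂, rfl⟩ := exists_equiv_sumMap_comp_eq g
  rw [← submatrix_submatrix, twoSum_submatrix]
  exact det_twoSum_submatrix_mem_range_signTypeCast (h₁.submatrix _ _) (h₂.submatrix _ _) e e'

end TwoSum

section Cogirth

variable {m n R : Type*} [Fintype m] [Fintype n]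

lemma hammingNorm_sum [Zero R] [DecidableEq R] (x : m ⊕ n → R) :
    hammingNorm x = hammingNorm (x ∘ Sum.inl) + hammingNorm (x ∘ Sum.inr) := by
  simp only [hammingNorm, Finset.card_filter, Fintype.sum_sum_type, Function.comp_apply]

lemma hammingNorm_comp_equiv [Zero R] [DecidableEq R] (x : n → R) (e : m ≃ n) :
    hammingNorm (x ∘ e) = hammingNorm x := by
  simp only [hammingNorm, Finset.card_filter, Function.comp_apply]
  exact e.sum_comp fun i => if x i ≠ 0 then 1 else 0

/-- Every nonzero combination of the rows of `[I | A]` has at least `d` nonzero entries: over a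
field, the matroid represented by `[I | A]` has cogirth at least `d`. -/
def CogirthGE [NonUnitalNonAssocSemiring R] [DecidableEq R] (A : Matrix m n R) (d : ℕ) : Prop :=
  ∀ y : m → R, y ≠ 0 → d ≤ hammingNorm y + hammingNorm (y ᵥ* A)

lemma CogirthGE.reindex [NonUnitalNonAssocSemiring R] [DecidableEq R] {m' n' : Type*} [Fintype m']
    [Fintype n'] {A : Matrix m n R} {d : ℕ} (hA : CogirthGE A d) (e : m ≃ m') (e' : n ≃ n') :
    CogirthGE (A.reindex e e') d := by
  intro y hy
  have hye : y ∘ e ≠ 0 := fun h => hy (e.surjective.injective_comp_right h)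
  simpa [submatrix_vecMul_equiv, hammingNorm_comp_equiv] using hA _ hye

variable {m₁ m₂ n₁ n₂ : Type*} [Fintype m₁] [Fintype m₂]

lemma sumElim_vecMul_twoSum [Semiring R] (B₁ : Matrix m₁ (n₁ ⊕ Fin 1) R)
    (B₂ : Matrix (Fin 1 ⊕ m₂) n₂ R) (y₁ : m₁ → R) (y₂ : m₂ → R) :
    Sum.elim y₁ y₂ ᵥ* twoSum B₁ B₂ =
      Sum.elim (y₁ ᵥ* B₁.toCols₁) (Sum.elim (y₁ ᵥ* B₁.toCols₂) y₂ ᵥ* B₂) := by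
  have hB₂ : Sum.elim (y₁ ᵥ* B₁.toCols₂) y₂ ᵥ* B₂ =
      (y₁ ᵥ* B₁.toCols₂) ᵥ* B₂.toRows₁ + y₂ ᵥ* B₂.toRows₂ := by
    rw [← sumElim_vecMul_fromRows, fromRows_toRows]
  simp [twoSum, vecMul_fromBlocks, hB₂, vecMul_vecMul]

variable [Fintype n₁] [Fintype n₂]

/- Let `t` be the entry of `y₁ B₁` in the last column. If `t = 0`, then `y` gives a row combination
of `[I | B₁]`, or of `[I | B₂]` when `y₁ = 0`. If `t ≠ 0`, then it gives one of each, and only the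
entry `t` of either is lost, which leaves `2 * (d - 1)` nonzero entries. -/
theorem CogirthGE.twoSum [Semiring R] [DecidableEq R] {B₁ : Matrix m₁ (n₁ ⊕ Fin 1) R}
    {B₂ : Matrix (Fin 1 ⊕ m₂) n₂ R} {d : ℕ} (hd : 2 ≤ d) (h₁ : CogirthGE B₁ d)
    (h₂ : CogirthGE B₂ d) : CogirthGE (twoSum B₁ B₂) d := by
  intro y hy
  obtain ⟨y₁, y₂, rfl⟩ : ∃ y₁ y₂, y = Sum.elim y₁ y₂ := ⟨_, _, (Sum.elim_comp_inl_inr y).symm⟩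
  set t := y₁ ᵥ* B₁.toCols₂ with ht
  have hB₁ : y₁ ᵥ* B₁ = Sum.elim (y₁ ᵥ* B₁.toCols₁) t := by
    rw [ht, ← vecMul_fromCols, fromCols_toCols]
  have h₁' := h₁ y₁
  have h₂' := h₂ (Sum.elim t y₂)
  have ht_le : hammingNorm t ≤ 1 := hammingNorm_le_card_fintype
  rw [hB₁] at h₁'
  rw [sumElim_vecMul_twoSum]
  simp only [hammingNorm_sum, Sum.elim_comp_inl, Sum.elim_comp_inr, ← ht] at h₁' h₂' ⊢
  rcases eq_or_ne y₁ 0 with rfl | hy₁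
  · have ht₀ : t = 0 := by rw [ht, zero_vecMul]
    have hy₂ : y₂ ≠ 0 := by
      rintro rfl
      exact hy Sum.elim_zero_zero
    have hz : Sum.elim t y₂ ≠ 0 := fun h => hy₂ (congrArg (· ∘ Sum.inr) h)
    have := h₂' hz
    rw [ht₀, hammingNorm_zero] at this
    lia
  · rcases eq_or_ne t 0 with ht₀ | ht₀
    · have := h₁' hy₁
      rw [ht₀, hammingNorm_zero] at this
      lia
    · have hz : Sum.elim t y₂ ≠ 0 := fun h => ht₀ (congrArg (· ∘ Sum.inl) h)
      have := h₁' hy₁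
      have := h₂' hz
      lia

end Cogirth

section NetworkMatrix

variable {m n V E : Type*}

/-- The incidence matrix `digraphIncid` with integer entries, which can be reduced modulo `2`. -/
def intIncid [DecidableEq V] (tail head : E → V) : Matrix V E ℤ :=
  of fun v e => (if v = head e then 1 else 0) - (if v = tail e then 1 else 0)

lemma intIncid_map_intCast [DecidableEq V] (tail head : E → V) :
    (intIncid tail head).map (Int.castRingHom ℝ) = digraphIncid tail head := by
  ext v e
  simp only [intIncid, digraphIncid, map_apply, of_apply]
  split_ifs <;> simp_all

lemma intCast_intIncid_eq_zero_iff [DecidableEq V] {F : Type*} [Ring F] [Nontrivial F]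
    {tail head : E → V} {v : V} {e : E} :
    (intIncid tail head v e : F) = 0 ↔ intIncid tail head v e = 0 := by
  simp only [intIncid, of_apply]
  split_ifs <;> simp

lemma one_vecMul_intIncid [Fintype V] [DecidableEq V] (tail head : E → V) :
    (1 : V → ℤ) ᵥ* intIncid tail head = 0 := by
  ext e
  simp [intIncid, vecMul, dotProduct]

lemma hammingNorm_col_intIncid_le_two [Fintype V] [DecidableEq V] (tail head : E → V) (e : E) :
    hammingNorm ((intIncid tail head).col e) ≤ 2 := by
  refine (Finset.card_le_card (t := {head e, tail e}) fun v hv => ?_).trans Finset.card_le_two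
  have hne : intIncid tail head v e ≠ 0 := (Finset.mem_filter.1 hv).2
  contrapose! hne
  have hv' : v ≠ head e ∧ v ≠ tail e := by simpa using hne
  simp [intIncid, hv'.1, hv'.2]

lemma sum_hammingNorm_row [Fintype m] [Fintype n] {R : Type*} [Zero R] [DecidableEq R]
    (A : Matrix m n R) : ∑ i, hammingNorm (A.row i) = ∑ j, hammingNorm (A.col j) := by
  simp only [hammingNorm, Finset.card_filter]
  exact Finset.sum_comm

lemma exists_vecMul_submatrix_some_eq_row [Fintype m] [Nonempty m] {R : Type*} [Ring R]
    [Nontrivial R] {D : Matrix (Option m) E R} (hD : 1 ᵥ* D = 0) (v : Option m) :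
    ∃ c : m → R, c ≠ 0 ∧ c ᵥ* D.submatrix some id = D.row v := by
  classical
  cases v with
  | some i => exact ⟨Pi.single i 1, by simp, by ext e; simp⟩
  | none =>
    refine ⟨-1, by simp, ?_⟩
    ext e
    have hcol : D none e + ∑ i, D (some i) e = 0 := by
      simpa [vecMul, dotProduct, Fintype.sum_option] using congrFun hD e
    simpa [vecMul, dotProduct] using (eq_neg_of_add_eq_zero_left hcol).symm

lemma IsNetworkMatrix.exists_intIncid [Fintype m] [DecidableEq m] [Fintype n]
    {A : Matrix m n ℤ} (hA : IsNetworkMatrix (A.map (Int.castRingHom ℝ))) :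
    ∃ tail head : m ⊕ n → Option m,
      ((intIncid tail head).submatrix some Sum.inl).det ≠ 0 ∧
      (intIncid tail head).submatrix some Sum.inl * A =
        (intIncid tail head).submatrix some Sum.inr := by
  obtain ⟨tail, head, hunit, hA⟩ := hA
  rw [← intIncid_map_intCast, submatrix_map] at hA hunit
  refine ⟨tail, head, fun h => hunit.ne_zero ?_, ?_⟩
  · rw [← RingHom.mapMatrix_apply, ← RingHom.map_det, h, map_zero]
  · refine map_injective (Int.castRingHom ℝ).injective_int ?_
    beta_reduce
    rw [Matrix.map_mul, hA, mul_nonsing_inv_cancel_left _ _ hunit, submatrix_map]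

lemma CogirthGE.le_hammingNorm_row_intIncid [Fintype m] [DecidableEq m] [Nonempty m] [Fintype n]
    {F : Type*} [Ring F] [Nontrivial F] [DecidableEq F] {A : Matrix m n ℤ} {d : ℕ}
    (hA : CogirthGE (A.map (Int.castRingHom F)) d) {tail head : m ⊕ n → Option m}
    (hdet : ((intIncid tail head).submatrix some Sum.inl).det ≠ 0)
    (hmul : (intIncid tail head).submatrix some Sum.inl * A =
      (intIncid tail head).submatrix some Sum.inr) (v : Option m) :
    d ≤ hammingNorm ((intIncid tail head).row v) := by
  obtain ⟨c, hc, hrow⟩ :=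
    exists_vecMul_submatrix_some_eq_row (one_vecMul_intIncid tail head) v
  set D := intIncid tail head
  let y : m → ℤ := D.row v ∘ Sum.inl
  have hy : y = c ᵥ* D.submatrix some Sum.inl := by
    simp only [y, ← hrow]
    rfl
  have hyA : D.row v ∘ Sum.inr = y ᵥ* A := by
    rw [hy, vecMul_vecMul, hmul, ← hrow]
    rfl
  have hy₀ : y ≠ 0 := fun h => hc (eq_zero_of_vecMul_eq_zero hdet (hy ▸ h))
  have hyF : Int.castRingHom F ∘ y ≠ 0 := by
    contrapose! hy₀
    ext i
    exact intCast_intIncid_eq_zero_iff.1 (congrFun hy₀ i)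
  calc d ≤ hammingNorm (Int.castRingHom F ∘ y) +
        hammingNorm ((Int.castRingHom F ∘ y) ᵥ* A.map (Int.castRingHom F)) := hA _ hyF
    _ = hammingNorm (Int.castRingHom F ∘ y) + hammingNorm (Int.castRingHom F ∘ (y ᵥ* A)) := by
      congr 2
      exact funext fun j => (RingHom.map_vecMul _ _ _ j).symm
    _ ≤ hammingNorm y + hammingNorm (y ᵥ* A) :=
      add_le_add (hammingNorm_comp_le_hammingNorm _ fun _ => map_zero _)
        (hammingNorm_comp_le_hammingNorm _ fun _ => map_zero _)
    _ = hammingNorm (D.row v) := by rw [hammingNorm_sum (D.row v), hyA]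

theorem IsNetworkMatrix.cogirth_mul_le [Fintype m] [DecidableEq m] [Nonempty m] [Fintype n]
    {F : Type*} [Ring F] [Nontrivial F] [DecidableEq F] {A : Matrix m n ℤ} {d : ℕ}
    (hA : IsNetworkMatrix (A.map (Int.castRingHom ℝ)))
    (hd : CogirthGE (A.map (Int.castRingHom F)) d) :
    d * (Fintype.card m + 1) ≤ 2 * (Fintype.card m + Fintype.card n) := by
  obtain ⟨tail, head, hdet, hmul⟩ := hA.exists_intIncid
  calc d * (Fintype.card m + 1) = ∑ _v : Option m, d := by simp [mul_comm]
    _ ≤ ∑ v, hammingNorm ((intIncid tail head).row v) :=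
      Finset.sum_le_sum fun v _ => hd.le_hammingNorm_row_intIncid hdet hmul v
    _ = ∑ e, hammingNorm ((intIncid tail head).col e) := sum_hammingNorm_row _
    _ ≤ ∑ _e : m ⊕ n, 2 :=
      Finset.sum_le_sum fun e _ => hammingNorm_col_intIncid_le_two tail head e
    _ = 2 * (Fintype.card m + Fintype.card n) := by simp [mul_comm]

end NetworkMatrix

section Seymour

/-- The first of the two special totally unimodular matrices in Seymour's decomposition theorem. -/
def seymourB₁ : Matrix (Fin 5) (Fin 5) ℤ :=
  !![0, 0, 1, -1, 1;
     1, 0, 0, 1, -1;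
     -1, 1, 0, 0, 1;
     1, -1, 1, 0, 0;
     0, 1, -1, 1, 0]

/-- The second of the two special totally unimodular matrices in Seymour's decomposition theorem. -/
def seymourB₂ : Matrix (Fin 5) (Fin 5) ℤ :=
  !![1, 1, 1, 1, 1;
     1, 1, 1, 0, 0;
     1, 0, 1, 1, 0;
     1, 0, 0, 1, 1;
     1, 1, 0, 0, 1]

set_option synthInstance.maxSize 1000 in
lemma isTotallyUnimodular_seymourB₁ : seymourB₁.IsTotallyUnimodular := by
  apply isTotallyUnimodular_of_det_of_strictMono <;> simp only [Set.mem_range, StrictMono] <;>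
    decide +kernel

set_option synthInstance.maxSize 1000 in
lemma isTotallyUnimodular_seymourB₂ : seymourB₂.IsTotallyUnimodular := by
  apply isTotallyUnimodular_of_det_of_strictMono <;> simp only [Set.mem_range, StrictMono] <;>
    decide +kernel

lemma cogirthGE_seymourB₁_zmod_two : CogirthGE (seymourB₁.map (Int.castRingHom (ZMod 2))) 4 := by
  unfold CogirthGE
  decide +kernel

lemma cogirthGE_seymourB₂_zmod_two : CogirthGE (seymourB₂.map (Int.castRingHom (ZMod 2))) 4 := by
  unfold CogirthGE
  decide +kernel

/-- The 2-sum of `seymourB₁` and `seymourB₂` along the last column of the former and the first row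
of the latter, with rows and columns numbered in the order of the blocks. -/
def seymourTwoSum : Matrix (Fin 9) (Fin 9) ℤ :=
  (twoSum (seymourB₁.reindex (.refl _) finSumFinEquiv.symm)
    (seymourB₂.reindex finSumFinEquiv.symm (.refl _))).reindex
      (finSumFinEquiv (m := 5) (n := 4)) (finSumFinEquiv (m := 4) (n := 5))

lemma seymourTwoSum_map_intCast_real :
    seymourTwoSum.map (Int.castRingHom ℝ) =
      !![0, 0, 1, -1, 1, 1, 1, 1, 1;
         1, 0, 0, 1, -1, -1, -1, -1, -1;
         -1, 1, 0, 0, 1, 1, 1, 1, 1;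
         1, -1, 1, 0, 0, 0, 0, 0, 0;
         0, 1, -1, 1, 0, 0, 0, 0, 0;
         0, 0, 0, 0, 1, 1, 1, 0, 0;
         0, 0, 0, 0, 1, 0, 1, 1, 0;
         0, 0, 0, 0, 1, 0, 0, 1, 1;
         0, 0, 0, 0, 1, 1, 0, 0, 1] := by
  have entries : seymourTwoSum =
      !![0, 0, 1, -1, 1, 1, 1, 1, 1;
         1, 0, 0, 1, -1, -1, -1, -1, -1;
         -1, 1, 0, 0, 1, 1, 1, 1, 1;
         1, -1, 1, 0, 0, 0, 0, 0, 0;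
         0, 1, -1, 1, 0, 0, 0, 0, 0;
         0, 0, 0, 0, 1, 1, 1, 0, 0;
         0, 0, 0, 0, 1, 0, 1, 1, 0;
         0, 0, 0, 0, 1, 0, 0, 1, 1;
         0, 0, 0, 0, 1, 1, 0, 0, 1] := by decide +kernel
  rw [entries]
  simp [← Matrix.ext_iff, Fin.forall_fin_succ]

lemma isTotallyUnimodular_seymourTwoSum : seymourTwoSum.IsTotallyUnimodular :=
  (isTotallyUnimodular_twoSum (isTotallyUnimodular_seymourB₁.submatrix _ _)
    (isTotallyUnimodular_seymourB₂.submatrix _ _)).submatrix _ _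

lemma cogirthGE_seymourTwoSum_zmod_two :
    CogirthGE (seymourTwoSum.map (Int.castRingHom (ZMod 2))) 4 := by
  have h₁ := cogirthGE_seymourB₁_zmod_two.reindex (.refl _) (finSumFinEquiv (m := 4) (n := 1)).symm
  have h₂ := cogirthGE_seymourB₂_zmod_two.reindex (finSumFinEquiv (m := 1) (n := 4)).symm (.refl _)
  rw [seymourTwoSum, reindex_apply, ← submatrix_map, twoSum_map]
  exact (CogirthGE.twoSum (by simp) h₁ h₂).reindex finSumFinEquiv finSumFinEquiv

end Seymour

/-- The 2-sum `M = B₁ ⊕₂ B₂` of Seymour's two special totally unimodular building blocks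
(along the last column of `B₁` and the first row of `B₂`) is totally unimodular but is not a
network matrix. -/
theorem twoSum_B1_B2_TU_not_network :
    IsTU (!![0, 0, 1, -1, 1, 1, 1, 1, 1;
             1, 0, 0, 1, -1, -1, -1, -1, -1;
             -1, 1, 0, 0, 1, 1, 1, 1, 1;
             1, -1, 1, 0, 0, 0, 0, 0, 0;
             0, 1, -1, 1, 0, 0, 0, 0, 0;
             0, 0, 0, 0, 1, 1, 1, 0, 0;
             0, 0, 0, 0, 1, 0, 1, 1, 0;
             0, 0, 0, 0, 1, 0, 0, 1, 1;
             0, 0, 0, 0, 1, 1, 0, 0, 1] : Matrix (Fin 9) (Fin 9) ℝ) ∧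
    ¬ IsNetworkMatrix (!![0, 0, 1, -1, 1, 1, 1, 1, 1;
             1, 0, 0, 1, -1, -1, -1, -1, -1;
             -1, 1, 0, 0, 1, 1, 1, 1, 1;
             1, -1, 1, 0, 0, 0, 0, 0, 0;
             0, 1, -1, 1, 0, 0, 0, 0, 0;
             0, 0, 0, 0, 1, 1, 1, 0, 0;
             0, 0, 0, 0, 1, 0, 1, 1, 0;
             0, 0, 0, 0, 1, 0, 0, 1, 1;
             0, 0, 0, 0, 1, 1, 0, 0, 1] : Matrix (Fin 9) (Fin 9) ℝ) := by
  rw [← seymourTwoSum_map_intCast_real, isTU_iff_isTotallyUnimodular]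
  refine ⟨isTotallyUnimodular_map _ isTotallyUnimodular_seymourTwoSum, fun hnet => ?_⟩
  have hcount : 4 * (9 + 1) ≤ 2 * (9 + 9) := by
    simpa only [Fintype.card_fin] using hnet.cogirth_mul_le cogirthGE_seymourTwoSum_zmod_two
  contradiction
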